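/- Let n ≥ 1 and 1 ≤ k ≤ n, and define G(λ) := (σ_n(λ)/σ_{n−k}(λ))^{1/k} for λ ∈ ℝⁿ with all entries strictly positive. Then G is differentiable at each such λ and the sum of its partial derivatives satisfies ∑_{i=1}^n (∂G/∂λ_i)(λ) ≥ C(n,k)^{−1/k}, where C(n,k) is the binomial coefficient. -/

import Mathlib

/-- The `k`-th elementary symmetric polynomial of `lam : Fin n → ℝ`,
with the conventions `σ₀ = 1` and `σ_k = 0` for `k > n`. -/
noncomputable def esym (n k : ℕ) (lam : Fin n → ℝ) : ℝ :=
  ∑ s ∈ Finset.powersetCard k (Finset.univ : Finset (Fin n)), ∏ i ∈ s, lam i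

/-- The Hessian quotient operator `G(λ) = (σ_n(λ)/σ_{n−k}(λ))^{1/k}`. -/
noncomputable def Gq (n k : ℕ) (lam : Fin n → ℝ) : ℝ :=
  (esym n n lam / esym n (n - k) lam) ^ ((1 : ℝ) / (k : ℝ))

/-!
In the variables `μ = λ⁻¹` the operator is `G = σ_k(μ)^(-1/k)`. Writing `μ|i` for `μ` with its
`i`-th entry removed, `∑ ∂G/∂λ_i = (1/k) σ_k(μ)^(-1/k - 1) ∑ μ_i² σ_{k-1}(μ|i)`. Since
`μ_i σ_{k-1}(μ|i) = σ_k(μ) - σ_k(μ|i)` is ordered in the same way as `μ_i`, Chebyshev's sum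
inequality bounds the last sum below by `k σ_k(μ) σ_1(μ) / n`. What remains,
`σ_k(μ)^(-1/k) σ_1(μ) / n`, is at least `C(n,k)^(-1/k)` by Maclaurin's inequality, itself an
iteration of Chebyshev's.
-/

open Finset

/-- The `k`-th elementary symmetric polynomial in the entries `f i` with `i ∈ s`, so that
`esym n k lam` is `esymmOn univ lam k`; a variable finset `s` allows entries to be removed. -/
def esymmOn {ι R : Type*} [CommSemiring R] (s : Finset ι) (f : ι → R) (k : ℕ) : R :=
  ∑ t ∈ s.powersetCard k, ∏ i ∈ t, f i

namespace esymmOn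

variable {ι R : Type*}

section CommSemiring

variable [CommSemiring R]

theorem zero_right (s : Finset ι) (f : ι → R) : esymmOn s f 0 = 1 := by
  simp [esymmOn]

theorem card_right (s : Finset ι) (f : ι → R) : esymmOn s f #s = ∏ i ∈ s, f i := by
  simp [esymmOn]

theorem eq_zero_of_card_lt {s : Finset ι} (f : ι → R) {k : ℕ} (hk : #s < k) :
    esymmOn s f k = 0 := by
  simp [esymmOn, powersetCard_eq_empty.2 hk]

theorem congr {s : Finset ι} {f g : ι → R} (h : ∀ i ∈ s, f i = g i) (k : ℕ) :
    esymmOn s f k = esymmOn s g k :=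
  sum_congr rfl fun _ ht => prod_congr rfl fun i hi => h i ((mem_powersetCard.1 ht).1 hi)

variable [DecidableEq ι]

theorem insert_succ {s : Finset ι} {a : ι} (ha : a ∉ s) (f : ι → R) (k : ℕ) :
    esymmOn (insert a s) f (k + 1) = esymmOn s f (k + 1) + f a * esymmOn s f k := by
  have notMem_of_mem {m : ℕ} {t : Finset ι} (ht : t ∈ s.powersetCard m) : a ∉ t :=
    fun hat => ha ((mem_powersetCard.1 ht).1 hat)
  have hdisj : Disjoint (s.powersetCard (k + 1)) ((s.powersetCard k).image (insert a)) := by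
    refine disjoint_left.2 fun t ht ht' => notMem_of_mem ht ?_
    obtain ⟨u, -, rfl⟩ := mem_image.1 ht'
    exact mem_insert_self a u
  have hinj : Set.InjOn (insert a) (s.powersetCard k : Set (Finset ι)) := fun t ht u hu h => by
    rw [← erase_insert (notMem_of_mem ht), h, erase_insert (notMem_of_mem hu)]
  rw [esymmOn, powersetCard_succ_insert ha, sum_union hdisj, sum_image hinj, esymmOn, esymmOn,
    mul_sum]
  exact congrArg _ (sum_congr rfl fun t ht => prod_insert (notMem_of_mem ht))

theorem succ_eq_erase_add {s : Finset ι} {i : ι} (hi : i ∈ s) (f : ι → R) (k : ℕ) :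
    esymmOn s f (k + 1) = esymmOn (s.erase i) f (k + 1) + f i * esymmOn (s.erase i) f k := by
  rw [← insert_succ (notMem_erase i s), insert_erase hi]

/-- A `k`-subset `t` of `s` lies in `s.erase i` for the `#s - k` indices `i ∈ s \ t`. -/
theorem sum_erase (s : Finset ι) (f : ι → R) (k : ℕ) :
    ∑ i ∈ s, esymmOn (s.erase i) f k = ((#s - k : ℕ) : R) * esymmOn s f k := by
  have hmem (i : ι) (t : Finset ι) :
      i ∈ s ∧ t ∈ (s.erase i).powersetCard k ↔ i ∈ s \ t ∧ t ∈ s.powersetCard k := by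
    simp only [mem_powersetCard, subset_erase, mem_sdiff]
    tauto
  simp only [esymmOn, mul_sum]
  rw [sum_comm' hmem]
  refine sum_congr rfl fun t ht => ?_
  obtain ⟨hts, rfl⟩ := mem_powersetCard.1 ht
  rw [sum_const, card_sdiff_of_subset hts, nsmul_eq_mul]

end CommSemiring

theorem sum_mul_erase [CommRing R] [DecidableEq ι] (s : Finset ι) (f : ι → R) (k : ℕ) :
    ∑ i ∈ s, f i * esymmOn (s.erase i) f k = (k + 1) * esymmOn s f (k + 1) := by
  have hterm : ∀ i ∈ s, f i * esymmOn (s.erase i) f k =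
      esymmOn s f (k + 1) - esymmOn (s.erase i) f (k + 1) := fun i hi =>
    eq_sub_of_add_eq' (succ_eq_erase_add hi f k).symm
  rw [sum_congr rfl hterm, sum_sub_distrib, sum_const, sum_erase, nsmul_eq_mul]
  rcases le_or_gt (k + 1) #s with hk | hk
  · push_cast [Nat.cast_sub hk]
    ring
  · simp only [eq_zero_of_card_lt f hk, mul_zero, sub_zero]

section OrderedSemiring

variable [CommSemiring R] [PartialOrder R] {s : Finset ι} {f : ι → R}

theorem nonneg [IsOrderedRing R] (hf : ∀ i ∈ s, 0 ≤ f i) (k : ℕ) : 0 ≤ esymmOn s f k :=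
  sum_nonneg fun _ ht => prod_nonneg fun i hi => hf i ((mem_powersetCard.1 ht).1 hi)

theorem pos [IsStrictOrderedRing R] (hf : ∀ i ∈ s, 0 < f i) {k : ℕ} (hk : k ≤ #s) :
    0 < esymmOn s f k :=
  sum_pos (fun _ ht => prod_pos fun i hi => hf i ((mem_powersetCard.1 ht).1 hi))
    (powersetCard_nonempty.2 hk)

theorem erase_le_erase [IsOrderedRing R] [DecidableEq ι] (hf : ∀ i ∈ s, 0 ≤ f i) {i j : ι}
    (hi : i ∈ s) (hj : j ∈ s) (hij : f i ≤ f j) (k : ℕ) :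
    esymmOn (s.erase j) f k ≤ esymmOn (s.erase i) f k := by
  rcases eq_or_ne i j with rfl | hne
  · rfl
  cases k with
  | zero => simp only [zero_right, le_refl]
  | succ k =>
    rw [succ_eq_erase_add (mem_erase.2 ⟨hne, hi⟩), succ_eq_erase_add (mem_erase.2 ⟨hne.symm, hj⟩),
      erase_right_comm]
    gcongr
    exact nonneg (fun l hl => hf l (mem_of_mem_erase (mem_of_mem_erase hl))) k

end OrderedSemiring

section LinearOrderedRing

variable [CommRing R] [LinearOrder R] [IsStrictOrderedRing R] {s : Finset ι} {f : ι → R}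

section Erase

variable [DecidableEq ι]

theorem antivaryOn_erase (hf : ∀ i ∈ s, 0 ≤ f i) (k : ℕ) :
    AntivaryOn f (fun i => esymmOn (s.erase i) f k) s := fun _ hi _ hj hlt =>
  le_of_not_ge fun hij => hlt.not_ge (erase_le_erase hf hi hj hij k)

theorem monovaryOn_mul_erase (hf : ∀ i ∈ s, 0 ≤ f i) (k : ℕ) :
    MonovaryOn f (fun i => f i * esymmOn (s.erase i) f k) s := fun i hi j hj hlt =>
  antivaryOn_erase hf (k + 1) hj hi <| by
    linarith [succ_eq_erase_add hi f k, succ_eq_erase_add hj f k]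

theorem sum_mul_succ_le (hf : ∀ i ∈ s, 0 ≤ f i) (k : ℕ) :
    (∑ i ∈ s, f i) * ((k + 1) * esymmOn s f (k + 1)) ≤
      #s * ∑ i ∈ s, f i ^ 2 * esymmOn (s.erase i) f k := by
  rw [← sum_mul_erase]
  simpa only [pow_two, mul_assoc] using (monovaryOn_mul_erase hf k).sum_mul_sum_le_card_mul_sum

end Erase

theorem card_mul_succ_le (hf : ∀ i ∈ s, 0 ≤ f i) (k : ℕ) :
    #s * ((k + 1) * esymmOn s f (k + 1)) ≤ (∑ i ∈ s, f i) * ((#s - k : ℕ) * esymmOn s f k) := by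
  classical
  rw [← sum_mul_erase, ← sum_erase]
  exact (antivaryOn_erase hf k).card_mul_sum_le_sum_mul_sum

theorem card_pow_mul_le_choose_mul_sum_pow (hf : ∀ i ∈ s, 0 ≤ f i) (k : ℕ) :
    #s ^ k * esymmOn s f k ≤ (#s).choose k * (∑ i ∈ s, f i) ^ k := by
  induction k with
  | zero => simp [zero_right]
  | succ k ih =>
    have hsum : 0 ≤ ∑ i ∈ s, f i := sum_nonneg hf
    have hchoose : ((#s).choose (k + 1) : R) * (k + 1) = (#s).choose k * (#s - k : ℕ) := by
      exact_mod_cast Nat.choose_succ_right_eq #s k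
    refine le_of_mul_le_mul_left ?_ (by positivity : (0 : R) < k + 1)
    calc (k + 1) * (#s ^ (k + 1) * esymmOn s f (k + 1))
        = #s ^ k * (#s * ((k + 1) * esymmOn s f (k + 1))) := by ring
      _ ≤ #s ^ k * ((∑ i ∈ s, f i) * ((#s - k : ℕ) * esymmOn s f k)) :=
        mul_le_mul_of_nonneg_left (card_mul_succ_le hf k) (by positivity)
      _ = (∑ i ∈ s, f i) * (#s - k : ℕ) * (#s ^ k * esymmOn s f k) := by ring
      _ ≤ (∑ i ∈ s, f i) * (#s - k : ℕ) * ((#s).choose k * (∑ i ∈ s, f i) ^ k) := by gcongr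
      _ = (#s).choose k * (#s - k : ℕ) * (∑ i ∈ s, f i) ^ (k + 1) := by ring
      _ = (k + 1) * ((#s).choose (k + 1) * (∑ i ∈ s, f i) ^ (k + 1)) := by rw [← hchoose]; ring

end LinearOrderedRing

theorem maclaurin {s : Finset ι} {f : ι → ℝ} (hf : ∀ i ∈ s, 0 ≤ f i) {k : ℕ} (hk : k ≠ 0)
    (hks : k ≤ #s) :
    (esymmOn s f k / (#s).choose k) ^ (k⁻¹ : ℝ) ≤ (∑ i ∈ s, f i) / #s := by
  have hs : (0 : ℝ) < #s := by exact_mod_cast hk.bot_lt.trans_le hks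
  have hchoose : (0 : ℝ) < (#s).choose k := by exact_mod_cast Nat.choose_pos hks
  have hmean : 0 ≤ (∑ i ∈ s, f i) / #s := div_nonneg (sum_nonneg hf) hs.le
  rw [Real.rpow_inv_le_iff_of_pos (div_nonneg (nonneg hf k) hchoose.le) hmean (by positivity),
    Real.rpow_natCast, div_pow, div_le_div_iff₀ hchoose (by positivity)]
  linarith [card_pow_mul_le_choose_mul_sum_pow hf k]

theorem choose_rpow_le_rpow_mul_mean {s : Finset ι} {f : ι → ℝ} (hf : ∀ i ∈ s, 0 < f i) {k : ℕ}
    (hk : k ≠ 0) (hks : k ≤ #s) :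
    ((#s).choose k : ℝ) ^ (-(1 / k) : ℝ) ≤
      esymmOn s f k ^ (-(1 / k) : ℝ) * ((∑ i ∈ s, f i) / #s) := by
  have hE : 0 < esymmOn s f k := pos hf hks
  calc ((#s).choose k : ℝ) ^ (-(1 / k) : ℝ)
      = esymmOn s f k ^ (-(1 / k) : ℝ) * (esymmOn s f k / (#s).choose k) ^ (k⁻¹ : ℝ) := by
        rw [Real.div_rpow hE.le (Nat.cast_nonneg _), one_div, Real.rpow_neg hE.le,
          Real.rpow_neg (Nat.cast_nonneg _)]
        field_simp
    _ ≤ esymmOn s f k ^ (-(1 / k) : ℝ) * ((∑ i ∈ s, f i) / #s) := by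
        gcongr
        exact maclaurin (fun i hi => (hf i hi).le) hk hks

theorem choose_rpow_le_sum_sq_mul_erase [DecidableEq ι] {s : Finset ι} {f : ι → ℝ}
    (hf : ∀ i ∈ s, 0 < f i) {k : ℕ} (hks : k + 1 ≤ #s) :
    ((#s).choose (k + 1) : ℝ) ^ (-(1 / (k + 1 : ℕ)) : ℝ) ≤
      ∑ i ∈ s, esymmOn s f (k + 1) ^ (-(1 / (k + 1 : ℕ)) - 1 : ℝ) / (k + 1 : ℕ) *
        (f i ^ 2 * esymmOn (s.erase i) f k) := by
  set E := esymmOn s f (k + 1)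
  set p : ℝ := -(1 / (k + 1 : ℕ))
  have hE : 0 < E := pos hf hks
  have hs : (0 : ℝ) < #s := by exact_mod_cast k.succ_pos.trans_le hks
  have hchebyshev : (∑ i ∈ s, f i) / #s * ((k + 1 : ℕ) * E) ≤
      ∑ i ∈ s, f i ^ 2 * esymmOn (s.erase i) f k := by
    rw [div_mul_eq_mul_div, div_le_iff₀' hs]
    exact_mod_cast sum_mul_succ_le (fun i hi => (hf i hi).le) k
  calc ((#s).choose (k + 1) : ℝ) ^ p
      ≤ E ^ p * ((∑ i ∈ s, f i) / #s) := choose_rpow_le_rpow_mul_mean hf k.succ_ne_zero hks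
    _ = E ^ (p - 1) / (k + 1 : ℕ) * ((∑ i ∈ s, f i) / #s * ((k + 1 : ℕ) * E)) := by
        rw [Real.rpow_sub_one hE.ne']
        field_simp
    _ ≤ E ^ (p - 1) / (k + 1 : ℕ) * ∑ i ∈ s, f i ^ 2 * esymmOn (s.erase i) f k := by gcongr
    _ = ∑ i ∈ s, E ^ (p - 1) / (k + 1 : ℕ) * (f i ^ 2 * esymmOn (s.erase i) f k) :=
        mul_sum ..

theorem card_sub_eq_prod_mul_inv [Field R] {s : Finset ι} {f : ι → R} (hf : ∀ i ∈ s, f i ≠ 0)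
    {k : ℕ} (hk : k ≤ #s) :
    esymmOn s f (#s - k) = (∏ i ∈ s, f i) * esymmOn s f⁻¹ k := by
  classical
  rw [esymmOn, esymmOn, mul_sum]
  refine (sum_nbij' (s \ ·) (s \ ·) (fun t ht => ?_) (fun t ht => ?_) (fun t ht => ?_)
    (fun t ht => ?_) (fun t ht => ?_)).symm <;>
    obtain ⟨hts, htcard⟩ := mem_powersetCard.1 ht
  · exact mem_powersetCard.2 ⟨sdiff_subset, by rw [card_sdiff_of_subset hts, htcard]⟩
  · exact mem_powersetCard.2 ⟨sdiff_subset, by rw [card_sdiff_of_subset hts]; omega⟩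
  · exact Finset.sdiff_sdiff_eq_self hts
  · exact Finset.sdiff_sdiff_eq_self hts
  · have hprod : ∏ i ∈ t, f i ≠ 0 := prod_ne_zero_iff.2 fun i hi => hf i (hts hi)
    simp only [Pi.inv_apply, prod_inv_distrib]
    rw [← prod_sdiff hts, mul_inv_cancel_right₀ hprod]

theorem hasDerivAt_update {𝕜 : Type*} [NontriviallyNormedField 𝕜] [DecidableEq ι] {s : Finset ι}
    {i : ι} (hi : i ∈ s) (f : ι → 𝕜) (k : ℕ) (x : 𝕜) :
    HasDerivAt (fun t => esymmOn s (Function.update f i t) (k + 1))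
      (esymmOn (s.erase i) f k) x := by
  have haffine (t : 𝕜) : esymmOn s (Function.update f i t) (k + 1) =
      esymmOn (s.erase i) f (k + 1) + t * esymmOn (s.erase i) f k := by
    have hupdate : ∀ j ∈ s.erase i, Function.update f i t j = f j := fun j hj =>
      Function.update_of_ne (ne_of_mem_erase hj) t f
    rw [succ_eq_erase_add hi, congr hupdate, congr hupdate, Function.update_self]
  simp only [haffine]
  simpa only [id_eq, one_mul] using ((hasDerivAt_id x).mul_const _).const_add _

theorem differentiable {𝕜 : Type*} [NontriviallyNormedField 𝕜] [Finite ι] (s : Finset ι) (k : ℕ) :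
    Differentiable 𝕜 fun f : ι → 𝕜 => esymmOn s f k := by
  have := Fintype.ofFinite ι
  unfold esymmOn
  fun_prop

end esymmOn

section Gq

variable {n k : ℕ} {lam : Fin n → ℝ}

theorem Gq_eq_rpow_esymmOn_inv (hk : k ≤ n) (hpos : ∀ i, 0 < lam i) :
    Gq n k lam = esymmOn univ lam⁻¹ k ^ (-(1 / k) : ℝ) := by
  have hprod : ∏ i, lam i ≠ 0 := prod_ne_zero_iff.2 fun i _ => (hpos i).ne'
  have hcard : esymmOn univ lam n = ∏ i, lam i := by
    simpa only [card_fin] using esymmOn.card_right univ lam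
  have hcompl : esymmOn univ lam (n - k) = (∏ i, lam i) * esymmOn univ lam⁻¹ k := by
    simpa only [card_fin] using esymmOn.card_sub_eq_prod_mul_inv
      (s := univ) (fun i _ => (hpos i).ne') (hk.trans_eq (card_fin n).symm)
  change (esymmOn univ lam n / esymmOn univ lam (n - k)) ^ _ = _
  rw [hcard, hcompl, div_mul_cancel_left₀ hprod, Real.rpow_neg_eq_inv_rpow]

theorem differentiableAt_Gq (hpos : ∀ i, 0 < lam i) : DifferentiableAt ℝ (Gq n k) lam := by
  have hesym_pos {m : ℕ} (hm : m ≤ n) : 0 < esymmOn univ lam m :=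
    esymmOn.pos (fun i _ => hpos i) (hm.trans_eq (card_fin n).symm)
  have hesym_diff (m : ℕ) : DifferentiableAt ℝ (fun f : Fin n → ℝ => esymmOn univ f m) lam :=
    esymmOn.differentiable univ m lam
  have hden := (hesym_pos (Nat.sub_le n k)).ne'
  have hquot : DifferentiableAt ℝ
      (fun f : Fin n → ℝ => esymmOn univ f n / esymmOn univ f (n - k)) lam := by
    simpa only [div_eq_mul_inv] using (hesym_diff n).fun_mul ((hesym_diff (n - k)).fun_inv hden)
  exact hquot.rpow_const (Or.inl (div_ne_zero (hesym_pos le_rfl).ne' hden))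

theorem hasDerivAt_Gq_update (hk : k + 1 ≤ n) (hpos : ∀ i, 0 < lam i) (i : Fin n) :
    HasDerivAt (fun t => Gq n (k + 1) (Function.update lam i t))
      (esymmOn univ lam⁻¹ (k + 1) ^ (-(1 / (k + 1 : ℕ)) - 1 : ℝ) / (k + 1 : ℕ) *
        (lam⁻¹ i ^ 2 * esymmOn (univ.erase i) lam⁻¹ k)) (lam i) := by
  have hE : 0 < esymmOn univ lam⁻¹ (k + 1) := esymmOn.pos (fun i _ => inv_pos.2 (hpos i))
    (hk.trans_eq (card_fin n).symm)
  have hGq : (fun t => Gq n (k + 1) (Function.update lam i t)) =ᶠ[nhds (lam i)] fun t =>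
      esymmOn univ (Function.update lam⁻¹ i t⁻¹) (k + 1) ^ (-(1 / (k + 1 : ℕ)) : ℝ) := by
    filter_upwards [lt_mem_nhds (hpos i)] with t ht
    have hpos_update : ∀ j, 0 < Function.update lam i t j :=
      (Function.forall_update_iff lam fun _ x => 0 < x).2 ⟨ht, fun j _ => hpos j⟩
    rw [Gq_eq_rpow_esymmOn_inv hk hpos_update, Function.update_inv]
  have hesymm := (esymmOn.hasDerivAt_update (mem_univ i) lam⁻¹ k (lam i)⁻¹).comp (lam i)
    (hasDerivAt_inv (hpos i).ne')
  have hrpow := hesymm.rpow_const (p := -(1 / (k + 1 : ℕ))) (Or.inl (by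
    simpa only [Function.comp_apply, Function.update_inv, Function.update_eq_self] using hE.ne'))
  refine (hrpow.congr_of_eventuallyEq hGq).congr_deriv ?_
  simp only [Function.comp_apply, Function.update_inv, Function.update_eq_self, Pi.inv_apply]
  ring

end Gq

/-- For `1 ≤ k ≤ n` and `λ` with all entries positive, `G = (σ_n/σ_{n−k})^{1/k}`
is differentiable at `λ` and the sum of its partial derivatives is at least
`C(n,k)^{-1/k}`. -/
theorem sum_partials_Gq_ge (n k : ℕ) (hn : 1 ≤ n) (hk1 : 1 ≤ k) (hkn : k ≤ n)
    (lam : Fin n → ℝ) (hpos : ∀ i, 0 < lam i) :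
    DifferentiableAt ℝ (Gq n k) lam ∧
    ∃ d : Fin n → ℝ,
      (∀ i, HasDerivAt (fun t : ℝ => Gq n k (Function.update lam i t)) (d i) (lam i)) ∧
      ((n.choose k : ℝ)) ^ (-((1 : ℝ) / (k : ℝ))) ≤ ∑ i, d i := by
  obtain ⟨k, rfl⟩ := Nat.exists_eq_add_of_le' hk1
  refine ⟨differentiableAt_Gq hpos, _, hasDerivAt_Gq_update hkn hpos, ?_⟩
  have hinv : ∀ i ∈ univ, 0 < lam⁻¹ i := fun i _ => inv_pos.2 (hpos i)
  simpa only [card_fin] using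
    esymmOn.choose_rpow_le_sum_sq_mul_erase hinv (hkn.trans_eq (card_fin n).symm)
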